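/- If f : ℕ → ℂ is an MO function, then the partial sums satisfy ∑_{n ≤ x} f(n) = Ω(1/(x (log log x)^2)); that is, it is NOT the case that there exists a constant C such that |∑_{n ≤ x} f(n)| ≤ C/(x (log log x)^2) for all sufficiently large x. -/

import Mathlib

open Filter Finset

/-- `f` is a multiplicative arithmetical function: `f 1 = 1` and
`f (m*n) = f m * f n` whenever `gcd m n = 1`. -/
def IsMultFn (f : ℕ → ℂ) : Prop :=
  f 1 = 1 ∧ ∀ m n : ℕ, Nat.Coprime m n → f (m * n) = f m * f n

/-- The series `∑_{k=0}^∞ g k` converges (in the sense of partial sums) to `L`. -/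
def SeriesTendsTo (g : ℕ → ℂ) (L : ℂ) : Prop :=
  Filter.Tendsto (fun N => ∑ k ∈ Finset.range N, g k) Filter.atTop (nhds L)

/-- `f` is an MO function: multiplicative, `∑_{n=1}^∞ f n = 0`, and for each prime `p`
the series `∑_{k=0}^∞ f (p^k)` converges to a nonzero value. -/
def IsMO (f : ℕ → ℂ) : Prop :=
  IsMultFn f ∧ SeriesTendsTo (fun n => f (n + 1)) 0 ∧
    ∀ p : ℕ, p.Prime → ∃ L : ℂ, L ≠ 0 ∧ SeriesTendsTo (fun k => f (p ^ k)) L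


lemma sum_blocks (h : ℕ → ℝ) (u : ℕ → ℕ) (hu : Monotone u) (a b : ℕ) (hab : a ≤ b) :
    ∑ n ∈ Ico (u a) (u b), h n = ∑ k ∈ Ico a b, ∑ n ∈ Ico (u k) (u (k+1)), h n := by
  induction b, hab using Nat.le_induction with
  | base => simp
  | succ b hb ih =>
    rw [sum_Ico_succ_top hb, ← ih, sum_Ico_consecutive _ (hu hb) (hu (Nat.le_succ b))]

lemma prime_block (k : ℕ) (hk : 1 ≤ k) :
    ∑ p ∈ Ico ((2:ℕ)^k) (2^(k+1)), (if Nat.Prime p then 1/(p:ℝ) else 0) ≤ 4 / k := by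
  have hl : 0 < Real.log 2 := Real.log_pos (by norm_num)
  have hk' : (0:ℝ) < k := by exact_mod_cast hk
  have h1 : ∑ p ∈ Ico ((2:ℕ)^k) (2^(k+1)), (if Nat.Prime p then 1/(p:ℝ) else 0) ≤
      ∑ p ∈ Ico ((2:ℕ)^k) (2^(k+1)), (if Nat.Prime p then Real.log p else 0) / (2^k * (k * Real.log 2)) := by
    apply sum_le_sum
    intro p hp
    rw [mem_Ico] at hp
    have hp' : (2:ℝ)^k ≤ p := by exact_mod_cast hp.1
    split_ifs with hpp
    · have h2 : k * Real.log 2 ≤ Real.log p := by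
        rw [← Real.log_pow]
        exact Real.log_le_log (by positivity) hp'
      have hp0 : (0:ℝ) < p := by exact_mod_cast hpp.pos
      rw [div_le_div_iff₀ hp0 (by positivity), one_mul, mul_comm]
      exact mul_le_mul h2 hp' (by positivity) (by linarith [mul_pos hk' hl])
    · simp
  have h3 : ∑ p ∈ Ico ((2:ℕ)^k) (2^(k+1)), (if Nat.Prime p then Real.log p else 0) ≤ Real.log 4 * 2^(k+1) := by
    refine le_trans ?_ (Chebyshev.theta_le_log4_mul_x (x := 2^(k+1)) (by positivity))
    rw [Chebyshev.theta_eq_sum_Icc, ← sum_filter]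
    have : ⌊(2:ℝ)^(k+1)⌋₊ = 2^(k+1) := by
      have := Nat.floor_natCast (R := ℝ) (2^(k+1))
      push_cast at this; exact this
    rw [this]
    apply sum_le_sum_of_subset_of_nonneg
    · intro p; simp only [mem_filter, mem_Ico, mem_Icc]; rintro ⟨⟨_, h⟩, h'⟩; exact ⟨⟨by omega, h.le⟩, h'⟩
    · intro p _ _; exact Real.log_natCast_nonneg p
  refine h1.trans ?_
  rw [← sum_div, div_le_div_iff₀ (by positivity) hk']
  have h4 : Real.log 4 = 2 * Real.log 2 := by
    rw [show (4:ℝ) = 2^2 by norm_num, Real.log_pow]; norm_num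
  rw [h4] at h3
  calc _ ≤ (2 * Real.log 2 * 2^(k+1)) * k := by gcongr
    _ = _ := by ring

lemma loglog_bound (j n : ℕ) (hj : 1 ≤ j) (hn : 2^(2^j) ≤ n) :
    (j:ℝ) / 4 ≤ Real.log (Real.log n) := by
  have h1 := Real.log_two_gt_d9
  have h1' := Real.log_two_lt_d9
  have hj' : (1:ℝ) ≤ j := by exact_mod_cast hj
  have hn' : (2:ℝ)^(2^j) ≤ n := by exact_mod_cast hn
  have h2 : (2:ℝ)^j * Real.log 2 ≤ Real.log n := by
    have := Real.log_le_log (by positivity) hn'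
    rw [Real.log_pow] at this
    push_cast at this; exact this
  have h3 := Real.log_le_log (by positivity) h2
  rw [Real.log_mul (by positivity) (by positivity), Real.log_pow] at h3
  have h4 : -(0.443:ℝ) ≤ Real.log (Real.log 2) := by
    have := Real.one_sub_inv_le_log_of_pos (x := Real.log 2) (by linarith)
    refine le_trans ?_ this
    have : (Real.log 2)⁻¹ ≤ 1.443 := by
      rw [inv_le_comm₀ (by linarith) (by norm_num)]
      refine le_trans ?_ h1.le
      norm_num
    linarith
  nlinarith

lemma summable_primes :
    Summable (fun n : ℕ => if n.Prime then 1/((n:ℝ) * Real.log (Real.log n) ^ 2) else 0) := by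
  set h : ℕ → ℝ := fun n : ℕ => if n.Prime then 1/((n:ℝ) * Real.log (Real.log n) ^ 2) else 0 with hh
  have h0 : ∀ n, 0 ≤ h n := by
    intro n; simp only [hh]; split_ifs <;> positivity
  set u : ℕ → ℕ := fun j => 2^(2^(j+1)) with hu
  have um : Monotone u := by
    intro a b hab; simp only [hu]; gcongr <;> norm_num
  have hb : ∀ j, ∑ n ∈ Ico (u j) (u (j+1)), h n ≤ 64 / ((j+1:ℕ):ℝ)^2 := by
    intro j
    set i := j + 1 with hi
    have hip : (0:ℝ) < (i:ℝ) := by positivity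
    have e1 : ∑ n ∈ Ico (u j) (u (j+1)), h n ≤
      ∑ n ∈ Ico ((2:ℕ)^(2^i)) (2^(2^(i+1))), (16 / (i:ℝ)^2) * (if n.Prime then 1/(n:ℝ) else 0) := by
      apply sum_le_sum
      intro n hn
      have hn := (mem_Ico.1 hn).1
      have := loglog_bound i n (by omega) hn
      have hL : 0 < Real.log (Real.log n) := lt_of_lt_of_le (by positivity) this
      simp only [hh]
      split_ifs with hp
      · have hp0 : (0:ℝ) < n := by exact_mod_cast hp.pos
        rw [div_mul_div_comm, mul_one, div_le_div_iff₀ (by positivity) (by positivity)]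
        have : ((i:ℝ)/4)^2 ≤ Real.log (Real.log n)^2 := by gcongr
        nlinarith
      · simp
    refine e1.trans ?_
    rw [← mul_sum, sum_blocks _ (fun k => 2^k) (fun a b hab => by dsimp only; gcongr; norm_num) (2^i) (2^(i+1)) (by gcongr <;> omega)]
    have e2 : ∑ k ∈ Ico ((2:ℕ)^i) (2^(i+1)), ∑ n ∈ Ico ((2:ℕ)^k) (2^(k+1)), (if n.Prime then 1/(n:ℝ) else 0) ≤
       ∑ k ∈ Ico ((2:ℕ)^i) (2^(i+1)), 4 / (2:ℝ)^i := by
      apply sum_le_sum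
      intro k hk
      have hk := (mem_Ico.1 hk).1
      have hk' : (2:ℝ)^i ≤ k := by exact_mod_cast hk
      refine (prime_block k (le_trans Nat.one_le_two_pow hk)).trans ?_
      gcongr
    have e3 : ∑ k ∈ Ico ((2:ℕ)^i) (2^(i+1)), 4 / (2:ℝ)^i = 4 := by
      rw [sum_const, Nat.card_Ico, pow_succ, mul_two, Nat.add_sub_cancel, nsmul_eq_mul]
      push_cast; field_simp
    rw [e3] at e2
    calc _ ≤ 16 / (i:ℝ)^2 * 4 := by gcongr
      _ = _ := by ring
  have hs : Summable (fun j : ℕ => 64 / ((j+1:ℕ):ℝ)^2) := by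
    have := (Real.summable_one_div_nat_pow (p := 2)).2 (by norm_num)
    have := ((summable_nat_add_iff 1).2 this).mul_left 64
    simpa [div_eq_mul_inv] using this
  refine summable_of_sum_range_le (c := ∑ n ∈ range (u 0), h n + ∑' j : ℕ, 64 / ((j+1:ℕ):ℝ)^2) h0 fun N => ?_
  have hN : N ≤ u N := by
    have a1 : N < 2^N := Nat.lt_two_pow_self
    have a2 : 2^N < 2^(2^N) := Nat.lt_two_pow_self
    have a3 : 2^(2^N) ≤ u N := by simp only [hu]; gcongr <;> omega
    omega
  calc ∑ i ∈ range N, h i ≤ ∑ i ∈ range (u N), h i :=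
        sum_le_sum_of_subset_of_nonneg (range_subset_range.2 hN) (fun _ _ _ => h0 _)
    _ = ∑ n ∈ range (u 0), h n + ∑ k ∈ Ico 0 N, ∑ n ∈ Ico (u k) (u (k+1)), h n := by
        rw [← sum_blocks h u um 0 N (Nat.zero_le _), sum_range_add_sum_Ico _ (um (Nat.zero_le _))]
    _ ≤ ∑ n ∈ range (u 0), h n + ∑ k ∈ Ico 0 N, 64 / ((k+1:ℕ):ℝ)^2 := by
        gcongr with k hk; exact hb k
    _ ≤ _ := by
        gcongr
        exact hs.sum_le_tsum _ (fun _ _ => by positivity)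


lemma euler_part (g : ℕ → ℂ) (g0 : g 0 = 0) (g1 : g 1 = 1)
    (hm : ∀ m n : ℕ, Nat.Coprime m n → g (m * n) = g m * g n)
    (D : ℝ) (hD : ∀ n : ℕ, 1 ≤ n → ‖g n‖ ≤ D / n)
    (hp : Summable (fun n : ℕ => if Nat.Prime n then ‖g n‖ else 0)) :
    Summable (fun n => ‖g n‖) ∧ ((∀ p : ℕ, p.Prime → ∑' k, g (p^k) ≠ 0) → ∑' n, g n ≠ 0) := by
  have D0 : 0 ≤ D := by
    have := hD 1 le_rfl
    have h2 := norm_nonneg (g 1)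
    simp at this; linarith
  have hgeo : ∀ p : ℕ, p.Prime → ∀ k, ‖g (p^k)‖ ≤ D * ((p:ℝ)⁻¹)^k := by
    intro p hp k
    refine (hD _ (Nat.one_le_pow _ _ hp.pos)).trans_eq ?_
    push_cast; rw [inv_pow]; rfl
  have hinv : ∀ p : ℕ, p.Prime → (p:ℝ)⁻¹ ≤ 2⁻¹ := by
    intro p hp
    have : (2:ℝ) ≤ p := by exact_mod_cast hp.two_le
    gcongr
  have hgs : ∀ p : ℕ, p.Prime → Summable (fun k => ((p:ℝ)⁻¹)^k) := fun p hp =>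
    summable_geometric_of_lt_one (by positivity) (by linarith [hinv p hp])
  have hs : ∀ {p : ℕ}, p.Prime → Summable (fun k => ‖g (p^k)‖) := fun {p} hp =>
    Summable.of_nonneg_of_le (fun _ => norm_nonneg _) (hgeo p hp) ((hgs p hp).mul_left D)
  have hs1 : ∀ {p : ℕ}, p.Prime → Summable (fun k => ‖g (p^(k+1))‖) := fun {p} hp =>
    (summable_nat_add_iff 1).2 (hs hp)
  have hs2 : ∀ {p : ℕ}, p.Prime → Summable (fun k => ‖g (p^(k+2))‖) := fun {p} hp =>
    (summable_nat_add_iff 2).2 (hs hp)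
  set Q : ℕ → ℝ := fun p => if Nat.Prime p then ∑' k, ‖g (p^(k+1))‖ else 0 with hQ
  have Q0 : ∀ p, 0 ≤ Q p := by
    intro p; simp only [hQ]; split_ifs
    · exact tsum_nonneg fun _ => norm_nonneg _
    · exact le_rfl
  have hQs : Summable Q := by
    have h2 : Summable (fun n : ℕ => 2 * D * (1 / (n:ℝ)^2)) :=
      ((Real.summable_one_div_nat_pow (p := 2)).2 (by norm_num)).mul_left _
    refine Summable.of_nonneg_of_le Q0 (fun p => ?_) (hp.add h2)
    simp only [hQ]
    split_ifs with h
    · rw [(hs1 h).tsum_eq_zero_add]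
      simp only [zero_add, pow_one]
      gcongr
      calc ∑' k, ‖g (p^(k+1+1))‖ ≤ ∑' k, D * ((p:ℝ)⁻¹)^2 * ((p:ℝ)⁻¹)^k := by
            refine (hs2 h).tsum_le_tsum (fun k => ?_) ((hgs p h).mul_left _)
            refine (hgeo p h _).trans_eq ?_
            ring
        _ = D * ((p:ℝ)⁻¹)^2 * (1 - (p:ℝ)⁻¹)⁻¹ := by
            rw [tsum_mul_left, tsum_geometric_of_lt_one (by positivity) (by linarith [hinv p h])]
        _ ≤ D * ((p:ℝ)⁻¹)^2 * 2 := by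
            gcongr
            rw [inv_le_comm₀ (by linarith [hinv p h]) (by norm_num)]
            linarith [hinv p h]
        _ = _ := by rw [inv_pow]; ring
    · positivity
  have hsum : Summable (fun n => ‖g n‖) := by
    refine summable_of_sum_range_le (c := Real.exp (∑' p, Q p)) (fun _ => norm_nonneg _) fun N => ?_
    obtain ⟨s1, s2⟩ := EulerProduct.summable_and_hasSum_smoothNumbers_prod_primesBelow_tsum
      (f := fun n => ‖g n‖) (by simp [g1]) (fun {m n} h => by simp [hm m n h])
      (fun {p} h => by simpa using hs h) N
    have e1 : ∏ p ∈ N.primesBelow, ∑' n : ℕ, ‖g (p ^ n)‖ = ∏ p ∈ N.primesBelow, (1 + Q p) := by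
      refine prod_congr rfl fun p hp => ?_
      have h := Nat.prime_of_mem_primesBelow hp
      rw [(hs h).tsum_eq_zero_add]
      simp [hQ, h, g1]
    rw [e1] at s2
    have e2 := s2.summable.hasSum.unique s2
    have e3 : ∑ n ∈ range N, ‖g n‖ ≤ ∑' m : N.smoothNumbers, ‖g m‖ := by
      have : ∑ n ∈ range N, ‖g n‖ ≤ ∑' n, Set.indicator (N.smoothNumbers) (fun n => ‖g n‖) n := by
        refine le_trans (sum_le_sum fun n hn => ?_) (Summable.sum_le_tsum (range N) ?_ ?_)
        · by_cases h0 : n = 0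
          · rw [h0, g0, norm_zero]; exact Set.indicator_nonneg (fun _ _ => norm_nonneg _) _
          · rw [Set.indicator_of_mem]
            exact Nat.mem_smoothNumbers_of_lt (Nat.pos_of_ne_zero h0) (mem_range.1 hn)
        · intro n _; exact Set.indicator_nonneg (fun _ _ => norm_nonneg _) _
        · exact summable_subtype_iff_indicator.1 s2.summable
      rwa [← _root_.tsum_subtype] at this
    refine e3.trans (e2.le.trans ((Real.prod_one_add_le_exp_sum _ Q0).trans ?_))
    exact Real.exp_le_exp.2 (hQs.sum_le_tsum _ (fun _ _ => Q0 _))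
  refine ⟨hsum, fun hne => ?_⟩
  rw [← EulerProduct.eulerProduct_tprod g1 (fun {m n} h => hm m n h) hsum g0]
  have e : ∀ p : Nat.Primes, ∑' k, g ((p:ℕ)^k) = 1 + ∑' k, g ((p:ℕ)^(k+1)) := by
    intro p
    rw [(hs p.2).of_norm.tsum_eq_zero_add]; simp [g1]
  simp_rw [e]
  refine tprod_one_add_ne_zero_of_summable (fun p => ?_) ?_
  · rw [← e]; exact hne p p.2
  · refine Summable.of_nonneg_of_le (fun _ => norm_nonneg _) (fun p => ?_)
      (hQs.comp_injective Nat.Primes.coe_nat_injective)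
    simp only [Function.comp, hQ, p.2, if_true]
    exact norm_tsum_le_tsum_norm (hs1 p.2)

theorem stmt6 (f : ℕ → ℂ) (hf : IsMO f) :
    ¬ ∃ C : ℝ, ∀ᶠ x : ℝ in Filter.atTop,
      ‖∑ n ∈ Finset.Icc 1 ⌊x⌋₊, f n‖ ≤ C / (x * Real.log (Real.log x) ^ 2) := by
  rintro ⟨C, hC⟩
  obtain ⟨⟨f1, hmul⟩, hsum0, hprime⟩ := hf
  obtain ⟨X, hX⟩ := eventually_atTop.1 hC
  set N0 : ℕ := max (2^(2^4)) (⌈X⌉₊ + 1) with hN0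
  have hll : ∀ n : ℕ, N0 ≤ n → 1 ≤ Real.log (Real.log n) := by
    intro n hn
    have := loglog_bound 4 n (by norm_num) ((le_max_left _ _).trans hn)
    norm_num at this; exact this
  have hXn : ∀ n : ℕ, N0 ≤ n → X + 1 ≤ n := by
    intro n hn
    have h1 : ((⌈X⌉₊ + 1 : ℕ) : ℝ) ≤ n := by exact_mod_cast (le_max_right _ _).trans hn
    push_cast at h1
    linarith [Nat.le_ceil X]
  have hpos : ∀ n : ℕ, N0 ≤ n → 0 < n := fun n hn =>
    lt_of_lt_of_le (by positivity) ((le_max_left _ _).trans hn)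
  -- bound on `f n`
  have hfn : ∀ n : ℕ, N0 ≤ n → ‖f n‖ ≤ 2 * C * (1 / ((n:ℝ) * Real.log (Real.log n) ^ 2)) := by
    intro n hn
    have h1 := hX n (by linarith [hXn n hn])
    rw [Nat.floor_natCast] at h1
    obtain ⟨m, rfl⟩ : ∃ m, n = m + 1 := ⟨n - 1, by have := hpos n hn; omega⟩
    have hL := hll _ hn
    have hm0 : (0:ℝ) < ((m+1:ℕ):ℝ) := by positivity
    have h2 : ‖∑ k ∈ Finset.Icc 1 m, f k‖ ≤ C / (((m+1:ℕ):ℝ) * Real.log (Real.log ((m+1:ℕ):ℝ)) ^ 2) := by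
      have hl0 : Real.log ((m+1:ℕ):ℝ) ≠ 0 := by
        intro h; rw [h, Real.log_zero] at hL; linarith
      have hc : ContinuousAt (fun x : ℝ => C / (x * Real.log (Real.log x) ^ 2)) ((m+1:ℕ):ℝ) := by
        refine continuousAt_const.div (continuousAt_id.mul
          (((Real.continuousAt_log hm0.ne').log hl0).pow 2)) ?_
        have hL0 : Real.log (Real.log ((m+1:ℕ):ℝ)) ≠ 0 := (by linarith : (0:ℝ) < _).ne'
        exact mul_ne_zero hm0.ne' (pow_ne_zero 2 hL0)
      refine ge_of_tendsto (hc.tendsto.mono_left (nhdsWithin_le_nhds (s := Set.Iio ((m+1:ℕ):ℝ)))) ?_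
      have hmlt : (m:ℝ) < ((m+1:ℕ):ℝ) := by push_cast; linarith
      filter_upwards [Ioo_mem_nhdsLT hmlt] with x hx
      have h3 := hX x (by
        have := hXn _ hn
        push_cast at this; linarith [hx.1])
      have : ⌊x⌋₊ = m := by
        rw [Nat.floor_eq_iff (le_trans (Nat.cast_nonneg m) hx.1.le)]
        have := hx.2
        push_cast at this
        exact ⟨hx.1.le, this⟩
      rwa [this] at h3
    have e : f (m+1) = ∑ k ∈ Finset.Icc 1 (m+1), f k - ∑ k ∈ Finset.Icc 1 m, f k := by
      rw [Finset.sum_Icc_succ_top (by omega)]; ring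
    rw [e]
    refine (norm_sub_le _ _).trans ((add_le_add h1 h2).trans_eq ?_)
    ring
  have C0 : 0 ≤ C := by
    have h1 := hfn N0 le_rfl
    have h2 := hll N0 le_rfl
    have h3 : (0:ℝ) < N0 := by exact_mod_cast hpos N0 le_rfl
    by_contra hneg
    push Not at hneg
    have h4 : 0 < 1 / ((N0:ℝ) * Real.log (Real.log N0) ^ 2) := by positivity
    have := norm_nonneg (f N0)
    nlinarith
  set g : ℕ → ℂ := fun n => if n = 0 then 0 else f n with hg
  have gf : ∀ n, n ≠ 0 → g n = f n := fun n hn => by simp [hg, hn]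
  have g0 : g 0 = 0 := by simp [hg]
  have g1 : g 1 = 1 := by simp [hg, f1]
  have hgm : ∀ m n : ℕ, Nat.Coprime m n → g (m * n) = g m * g n := by
    intro m n h
    by_cases hm : m = 0
    · simp [hm, g0]
    by_cases hn : n = 0
    · simp [hn, g0]
    rw [gf _ hm, gf _ hn, gf _ (mul_ne_zero hm hn), hmul m n h]
  set E : ℝ := ∑ i ∈ range N0, i * ‖f i‖ with hE
  have E0 : 0 ≤ E := sum_nonneg fun _ _ => by positivity
  have hD : ∀ n : ℕ, 1 ≤ n → ‖g n‖ ≤ (2 * C + E) / n := by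
    intro n hn
    have hn' : (0:ℝ) < n := by exact_mod_cast hn
    rw [gf n (by omega), le_div_iff₀ hn']
    by_cases h : n < N0
    · have : (n:ℝ) * ‖f n‖ ≤ E :=
        single_le_sum (f := fun i : ℕ => (i:ℝ) * ‖f i‖) (fun _ _ => by positivity) (mem_range.2 h)
      linarith
    · push Not at h
      have h1 := hfn n h
      have h2 := hll n h
      have h3 : 1 / ((n:ℝ) * Real.log (Real.log n) ^ 2) ≤ 1 / n := by
        apply one_div_le_one_div_of_le hn'
        exact le_mul_of_one_le_right hn'.le (one_le_pow₀ h2)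
      have h4 : ‖f n‖ ≤ 2 * C * (1 / n) := h1.trans (by gcongr)
      calc ‖f n‖ * n ≤ 2 * C * (1 / n) * n := by gcongr
        _ = 2 * C := by field_simp
        _ ≤ _ := by linarith
  have hp : Summable (fun n : ℕ => if Nat.Prime n then ‖g n‖ else 0) := by
    refine Summable.of_norm_bounded_eventually_nat (summable_primes.mul_left (2 * C)) ?_
    filter_upwards [eventually_ge_atTop N0] with n hn
    split_ifs with h
    · rw [norm_norm, gf n h.ne_zero]; exact hfn n hn
    · simp
  obtain ⟨hs, hne⟩ := euler_part g g0 g1 hgm _ hD hp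
  refine hne (fun p hpp => ?_) ?_
  · obtain ⟨L, hL, ht⟩ := hprime p hpp
    have h1 : Summable (fun k => g (p^k)) :=
      hs.of_norm.comp_injective (Nat.pow_right_injective hpp.one_lt)
    have h2 := h1.hasSum.tendsto_sum_nat
    have h3 : ∀ k, g (p^k) = f (p^k) := fun k => gf _ (pow_ne_zero _ hpp.ne_zero)
    simp_rw [h3] at h2 ⊢
    rw [tendsto_nhds_unique h2 ht]
    exact hL
  · rw [hs.of_norm.tsum_eq_zero_add, g0, zero_add]
    have h2 := ((summable_nat_add_iff 1).2 hs.of_norm).hasSum.tendsto_sum_nat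
    have h3 : ∀ k, g (k + 1) = f (k + 1) := fun k => gf _ (Nat.succ_ne_zero k)
    simp_rw [h3] at h2 ⊢
    exact tendsto_nhds_unique h2 hsum0
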